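/- arXiv:2011.02972 — 2 statements merged into one kernel-verified Lean document; each statement's English description precedes it below -/
import Mathlib

section
/- Let 𝒜 ∈ U(p,q) have block decomposition 𝒜 = (A B; C D). Then 𝒜*𝒜 + I is invertible and its inverse is (1/2)·(I_p, −A⁻¹B; −B*(A*)⁻¹, I_q); that is, (𝒜*𝒜 + I)⁻¹ equals one half of the block matrix with diagonal blocks I_p and I_q and off-diagonal blocks −A⁻¹B and −B*(A*)⁻¹. -/
open Matrix

/-- The matrix I_{p,q} = diag(I_p, −I_q) defining the indefinite Hermitian form of
signature (p,q). -/
def Ipq (p q : ℕ) : Matrix (Fin p ⊕ Fin q) (Fin p ⊕ Fin q) ℂ :=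
  Matrix.fromBlocks 1 0 0 (-1)

/-!
Write `M = (A B; C D)` and `J = diag(1, -1)`. Since `Mᴴ * J * M = J`, one has
`Mᴴ * M + 1 = Mᴴ * (1 + J) * M + (1 - J)`, and the right-hand side only sees the upper block row:
it is `2 • (Tᴴ * T)` for the triangular matrix `T = (A B; 0 1)`. The upper left block of
`M * J * Mᴴ = J` reads `A * Aᴴ = 1 + B * Bᴴ`, which is positive definite. Hence `A` and `T` are
invertible, and the same identity collapses the upper left block of `T⁻¹ * (T⁻¹)ᴴ` to `1`.
-/

theorem isUnit_of_mul_conjTranspose_eq_one_add {m n K : Type*} [Fintype m] [DecidableEq m]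
    [Fintype n] [Field K] [PartialOrder K] [StarRing K] [StarOrderedRing K]
    {A : Matrix m m K} {B : Matrix m n K} (h : A * Aᴴ = 1 + B * Bᴴ) : IsUnit A := by
  have hpos : (A * Aᴴ).PosDef := h ▸
    PosDef.one.add_posSemidef (posSemidef_self_mul_conjTranspose B)
  exact isUnit_of_mul_isUnit_left hpos.isUnit

theorem inv_conjTranspose_mul_self_fromBlocks_zero_one {m n R : Type*} [Fintype m]
    [DecidableEq m] [Fintype n] [DecidableEq n] [CommRing R] [StarRing R] {A : Matrix m m R}
    {B : Matrix m n R} (hA : IsUnit A) (h : A * Aᴴ = 1 + B * Bᴴ) :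
    ((fromBlocks A B 0 1)ᴴ * fromBlocks A B 0 1)⁻¹ =
      fromBlocks 1 (-(A⁻¹ * B)) (-(Bᴴ * Aᴴ⁻¹)) (1 : Matrix n n R) := by
  have hT : (fromBlocks A B 0 (1 : Matrix n n R))⁻¹ = fromBlocks A⁻¹ (-(A⁻¹ * B)) 0 1 := by
    rw [inv_fromBlocks_zero₂₁_of_isUnit_iff A B 1 (iff_of_true hA isUnit_one), inv_one,
      Matrix.mul_one]
  have h₁₁ : A⁻¹ * Aᴴ⁻¹ + A⁻¹ * B * (Bᴴ * Aᴴ⁻¹) = 1 := calc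
    _ = A⁻¹ * (1 + B * Bᴴ) * Aᴴ⁻¹ := by
      simp only [Matrix.mul_add, Matrix.add_mul, Matrix.mul_one, Matrix.mul_assoc]
    _ = (A⁻¹ * A) * (A⁻¹ * A)ᴴ := by
      rw [← h, conjTranspose_mul, conjTranspose_nonsing_inv]
      simp only [Matrix.mul_assoc]
    _ = 1 := by
      rw [nonsing_inv_mul A ((isUnit_iff_isUnit_det A).mp hA), conjTranspose_one, Matrix.mul_one]
  rw [Matrix.mul_inv_rev, ← conjTranspose_nonsing_inv, hT, fromBlocks_conjTranspose,
    fromBlocks_multiply]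
  simp [conjTranspose_nonsing_inv, h₁₁]

/-- Membership in the indefinite unitary group `U(m,n)` over a star ring: `M` preserves the
Hermitian form with matrix `diag(1, -1)`, which is written in blocks. -/
def IsPseudoUnitary {m n R : Type*} [Fintype m] [DecidableEq m] [Fintype n] [DecidableEq n]
    [Ring R] [StarRing R] (M : Matrix (m ⊕ n) (m ⊕ n) R) : Prop :=
  Mᴴ * fromBlocks 1 0 0 (-1) * M = fromBlocks 1 0 0 (-1)

namespace IsPseudoUnitary

variable {m n R : Type*} [Fintype m] [DecidableEq m] [Fintype n] [DecidableEq n]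

protected theorem conjTranspose [Ring R] [IsStablyFiniteRing R] [StarRing R]
    {M : Matrix (m ⊕ n) (m ⊕ n) R} (hM : IsPseudoUnitary M) : IsPseudoUnitary Mᴴ := by
  rw [IsPseudoUnitary] at hM
  rw [IsPseudoUnitary, conjTranspose_conjTranspose]
  set J : Matrix (m ⊕ n) (m ⊕ n) R := fromBlocks 1 0 0 (-1) with hJ
  have hJJ : J * J = 1 := by simp [hJ, fromBlocks_multiply]
  have hleft : (J * Mᴴ) * (J * M) = 1 := by rw [mul_assoc, ← mul_assoc Mᴴ, hM, hJJ]
  have hright : (J * M) * (J * Mᴴ) = 1 := mul_eq_one_comm.mp hleft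
  calc M * J * Mᴴ = J * ((J * M) * (J * Mᴴ)) := by simp only [← mul_assoc, hJJ, one_mul]
    _ = J := by rw [hright, mul_one]

theorem toBlocks₁₁_mul_conjTranspose [Ring R] [IsStablyFiniteRing R] [StarRing R]
    {M : Matrix (m ⊕ n) (m ⊕ n) R} (hM : IsPseudoUnitary M) :
    M.toBlocks₁₁ * M.toBlocks₁₁ᴴ = 1 + M.toBlocks₁₂ * M.toBlocks₁₂ᴴ := by
  have h := hM.conjTranspose
  rw [IsPseudoUnitary, conjTranspose_conjTranspose, ← fromBlocks_toBlocks M,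
    fromBlocks_conjTranspose, fromBlocks_multiply, fromBlocks_multiply, fromBlocks_inj] at h
  simpa [← sub_eq_add_neg, sub_eq_iff_eq_add] using h.1

theorem conjTranspose_mul_self_add_one [Ring R] [StarRing R] {M : Matrix (m ⊕ n) (m ⊕ n) R}
    (hM : IsPseudoUnitary M) :
    Mᴴ * M + 1 = (2 : R) • ((fromBlocks M.toBlocks₁₁ M.toBlocks₁₂ 0 1)ᴴ *
      fromBlocks M.toBlocks₁₁ M.toBlocks₁₂ 0 1) := by
  obtain ⟨A, B, C, D, rfl⟩ : ∃ A B C D, M = fromBlocks A B C D :=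
    ⟨_, _, _, _, (fromBlocks_toBlocks M).symm⟩
  set M := fromBlocks A B C D with hMdef
  set J : Matrix (m ⊕ n) (m ⊕ n) R := fromBlocks 1 0 0 (-1) with hJ
  calc Mᴴ * M + 1 = (Mᴴ * M + Mᴴ * J * M) + (1 - J) := by rw [hM]; abel
    _ = _ := by
      rw [hMdef, hJ, ← fromBlocks_one, two_smul]
      simp only [sub_eq_add_neg, fromBlocks_neg, fromBlocks_conjTranspose, fromBlocks_multiply,
        fromBlocks_add, toBlocks_fromBlocks₁₁, toBlocks_fromBlocks₁₂, conjTranspose_zero,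
        conjTranspose_one, Matrix.mul_one, Matrix.mul_zero, Matrix.mul_neg,
        Matrix.neg_mul, neg_zero, neg_neg, add_zero, zero_add]
      congr 1 <;> abel

end IsPseudoUnitary

theorem inverse_of_starSelf_add_one_general {m n K : Type*} [Fintype m] [DecidableEq m]
    [Fintype n] [DecidableEq n] [Field K] [PartialOrder K] [StarRing K] [StarOrderedRing K]
    {M : Matrix (m ⊕ n) (m ⊕ n) K} (hM : IsPseudoUnitary M) :
    IsUnit (Mᴴ * M + 1).det ∧
    (Mᴴ * M + 1)⁻¹ =
      (1 / 2 : K) • fromBlocks 1 (-(M.toBlocks₁₁⁻¹ * M.toBlocks₁₂))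
        (-(M.toBlocks₁₂ᴴ * M.toBlocks₁₁ᴴ⁻¹)) 1 := by
  have hAB := hM.toBlocks₁₁_mul_conjTranspose
  have hA : IsUnit M.toBlocks₁₁ := isUnit_of_mul_conjTranspose_eq_one_add hAB
  have hinv := inv_conjTranspose_mul_self_fromBlocks_zero_one hA hAB
  rw [hM.conjTranspose_mul_self_add_one]
  set T : Matrix (m ⊕ n) (m ⊕ n) K := fromBlocks M.toBlocks₁₁ M.toBlocks₁₂ 0 1
  have hT : IsUnit T := isUnit_fromBlocks_zero₂₁.mpr ⟨hA, isUnit_one⟩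
  have hTT : IsUnit (Tᴴ * T).det := (isUnit_iff_isUnit_det _).mp (hT.star.mul hT)
  let := invertibleOfNonzero (two_ne_zero' K)
  constructor
  · rw [det_smul]
    exact ((isUnit_of_invertible (2 : K)).pow _).mul hTT
  · rw [inv_smul _ (2 : K) hTT, hinv, invOf_eq_inv, one_div]

/-- If 𝒜 ∈ U(p,q) has block decomposition 𝒜 = (A B; C D), then 𝒜*𝒜 + I is
invertible and (𝒜*𝒜 + I)⁻¹ = (1/2)·(I_p, −A⁻¹B; −B*(A*)⁻¹, I_q). -/
theorem inverse_of_starSelf_add_one {p q : ℕ} (hp : 1 ≤ p) (hq : 1 ≤ q)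
    (𝒜 : Matrix (Fin p ⊕ Fin q) (Fin p ⊕ Fin q) ℂ)
    (h𝒜 : 𝒜ᴴ * Ipq p q * 𝒜 = Ipq p q) :
    IsUnit (𝒜ᴴ * 𝒜 + 1).det ∧
    (𝒜ᴴ * 𝒜 + 1)⁻¹ =
      (1 / 2 : ℂ) • Matrix.fromBlocks
        (1 : Matrix (Fin p) (Fin p) ℂ)
        (-((𝒜.toBlocks₁₁)⁻¹ * 𝒜.toBlocks₁₂))
        (-((𝒜.toBlocks₁₂)ᴴ * ((𝒜.toBlocks₁₁)ᴴ)⁻¹))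
        (1 : Matrix (Fin q) (Fin q) ℂ) := by
  open scoped ComplexOrder in exact inverse_of_starSelf_add_one_general h𝒜
end

section
/- Let 𝒜 ∈ U(p,q) have block decomposition 𝒜 = (A B; C D). Then (𝒜*𝒜 − I)(𝒜*𝒜 + I)⁻¹ equals the block matrix (0, A⁻¹B; B*(A*)⁻¹, 0) with zero diagonal blocks and off-diagonal blocks A⁻¹B and B*(A*)⁻¹. -/
open Matrix

/-!
Write `J` for the signature matrix. Since `J² = 1` and `𝒜ᴴ J 𝒜 = J`, we can factor
`𝒜ᴴ𝒜 ± 1 = (𝒜ᴴ J ± J 𝒜ᴴ) (J 𝒜)`. The anticommutator `𝒜ᴴ J + J 𝒜ᴴ` is twice the block diagonal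
part of `𝒜ᴴ J`, and the commutator `𝒜ᴴ J - J 𝒜ᴴ` is twice its off-diagonal part. So the block
matrix `X` with off-diagonal entries `A⁻¹B` and `Bᴴ(Aᴴ)⁻¹` satisfies `𝒜ᴴ𝒜 - 1 = X (𝒜ᴴ𝒜 + 1)` as
soon as `B Dᴴ = A Cᴴ`, and this is an off-diagonal block of the dual relation `𝒜 J 𝒜ᴴ = J`. The
inverses exist because `𝒜ᴴ𝒜 + 1` and `AᴴA = CᴴC + 1` are positive definite.
-/

open LieAlgebra.Orthogonal (indefiniteDiagonal)

theorem mul_mul_eq_swap_of_mul_self_eq_one {M : Type*} [Monoid M] [IsDedekindFiniteMonoid M]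
    {j a b : M} (hj : j * j = 1) (h : b * j * a = j) : a * j * b = j := by
  have hleft : j * b * j * a = 1 := by rw [mul_assoc j, mul_assoc j, h, hj]
  calc a * j * b = a * (j * b * j) * j := by simp only [mul_assoc, hj, mul_one]
    _ = j := by rw [mul_eq_one_comm.mp hleft, one_mul]

theorem mul_sub_one_eq_mul_mul_add_one {R : Type*} [Ring R] {j a b x : R} (hj : j * j = 1)
    (h : b * j * a = j) (hx : x * (b * j + j * b) = b * j - j * b) :
    b * a - 1 = x * (b * a + 1) := by
  have hba : b * j * (j * a) = b * a := by rw [mul_assoc, ← mul_assoc j, hj, one_mul]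
  have hone : j * b * (j * a) = 1 := by rw [mul_assoc, ← mul_assoc b, h, hj]
  calc b * a - 1 = (b * j - j * b) * (j * a) := by rw [sub_mul, hba, hone]
    _ = x * ((b * j + j * b) * (j * a)) := by rw [← hx, mul_assoc]
    _ = x * (b * a + 1) := by rw [add_mul, hba, hone]

section Signature

variable {m n R : Type*} [DecidableEq m] [DecidableEq n] [CommRing R]

theorem indefiniteDiagonal_eq_fromBlocks :
    indefiniteDiagonal m n R = fromBlocks 1 0 0 (-1) := by
  rw [← diagonal_one, ← diagonal_one, diagonal_neg, fromBlocks_diagonal]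
  rfl

variable [Fintype m] [Fintype n]

theorem indefiniteDiagonal_mul_self :
    indefiniteDiagonal m n R * indefiniteDiagonal m n R = 1 := by
  simp [indefiniteDiagonal_eq_fromBlocks, fromBlocks_multiply]

variable (A : Matrix m m R) (B : Matrix m n R) (C : Matrix n m R) (D : Matrix n n R)

theorem fromBlocks_mul_indefiniteDiagonal :
    fromBlocks A B C D * indefiniteDiagonal m n R = fromBlocks A (-B) C (-D) := by
  simp [indefiniteDiagonal_eq_fromBlocks, fromBlocks_multiply]

theorem indefiniteDiagonal_mul_fromBlocks :
    indefiniteDiagonal m n R * fromBlocks A B C D = fromBlocks A B (-C) (-D) := by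
  simp [indefiniteDiagonal_eq_fromBlocks, fromBlocks_multiply]

theorem fromBlocks_mul_indefiniteDiagonal_add :
    fromBlocks A B C D * indefiniteDiagonal m n R + indefiniteDiagonal m n R * fromBlocks A B C D =
      (2 : R) • fromBlocks A 0 0 (-D) := by
  simp [fromBlocks_mul_indefiniteDiagonal, indefiniteDiagonal_mul_fromBlocks, fromBlocks_add,
    two_smul]

theorem fromBlocks_mul_indefiniteDiagonal_sub :
    fromBlocks A B C D * indefiniteDiagonal m n R - indefiniteDiagonal m n R * fromBlocks A B C D =
      (2 : R) • fromBlocks 0 (-B) C 0 := by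
  simp [fromBlocks_mul_indefiniteDiagonal, indefiniteDiagonal_mul_fromBlocks, fromBlocks_add,
    fromBlocks_neg, two_smul, sub_eq_add_neg]

end Signature

theorem isUnit_conjTranspose_mul_self_add_one {m n K : Type*} [Fintype m] [Fintype n]
    [DecidableEq n] [Field K] [PartialOrder K] [StarRing K] [StarOrderedRing K]
    (M : Matrix m n K) : IsUnit (Mᴴ * M + 1) :=
  (PosDef.posSemidef_add (posSemidef_conjTranspose_mul_self M) PosDef.one).isUnit

/-- Membership in the indefinite unitary group U(p,q): the matrix preserves the sesquilinear form
given by `indefiniteDiagonal m n R`. The index types `m` and `n` have cardinalities p and q, and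
the scalars may be any commutative star ring. -/
def IsIndefiniteUnitary {m n R : Type*} [Fintype m] [Fintype n] [DecidableEq m] [DecidableEq n]
    [CommRing R] [StarRing R] (M : Matrix (m ⊕ n) (m ⊕ n) R) : Prop :=
  Mᴴ * indefiniteDiagonal m n R * M = indefiniteDiagonal m n R

theorem isIndefiniteUnitary_iff_Ipq {p q : ℕ} {M : Matrix (Fin p ⊕ Fin q) (Fin p ⊕ Fin q) ℂ} :
    IsIndefiniteUnitary M ↔ Mᴴ * Ipq p q * M = Ipq p q := by
  rw [IsIndefiniteUnitary, indefiniteDiagonal_eq_fromBlocks, Ipq]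

namespace IsIndefiniteUnitary

variable {m n : Type*} [Fintype m] [Fintype n] [DecidableEq m] [DecidableEq n]

section CommRing

variable {R : Type*} [CommRing R] [StarRing R] {A : Matrix m m R} {B : Matrix m n R}
  {C : Matrix n m R} {D : Matrix n n R}

protected theorem conjTranspose {M : Matrix (m ⊕ n) (m ⊕ n) R} (h : IsIndefiniteUnitary M) :
    IsIndefiniteUnitary Mᴴ := by
  rw [IsIndefiniteUnitary, conjTranspose_conjTranspose]
  exact mul_mul_eq_swap_of_mul_self_eq_one indefiniteDiagonal_mul_self h

theorem conjTranspose_mul_self_eq_add_one (h : IsIndefiniteUnitary (fromBlocks A B C D)) :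
    Aᴴ * A = Cᴴ * C + 1 := by
  rw [IsIndefiniteUnitary, fromBlocks_conjTranspose, fromBlocks_mul_indefiniteDiagonal,
    fromBlocks_multiply, indefiniteDiagonal_eq_fromBlocks, fromBlocks_inj] at h
  rw [← sub_eq_iff_eq_add', sub_eq_add_neg, ← Matrix.neg_mul]
  exact h.1

theorem conjTranspose_mul_eq_conjTranspose_mul (h : IsIndefiniteUnitary (fromBlocks A B C D)) :
    Aᴴ * B = Cᴴ * D := by
  rw [IsIndefiniteUnitary, fromBlocks_conjTranspose, fromBlocks_mul_indefiniteDiagonal,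
    fromBlocks_multiply, indefiniteDiagonal_eq_fromBlocks, fromBlocks_inj] at h
  rw [← sub_eq_zero, sub_eq_add_neg, ← Matrix.neg_mul]
  exact h.2.1

theorem mul_conjTranspose_eq_mul_conjTranspose (h : IsIndefiniteUnitary (fromBlocks A B C D)) :
    A * Cᴴ = B * Dᴴ := by
  have hdual := h.conjTranspose
  rw [fromBlocks_conjTranspose] at hdual
  simpa only [conjTranspose_conjTranspose] using hdual.conjTranspose_mul_eq_conjTranspose_mul

theorem conjTranspose_mul_self_sub_one_eq_mul (h : IsIndefiniteUnitary (fromBlocks A B C D))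
    (hA : IsUnit A) :
    (fromBlocks A B C D)ᴴ * fromBlocks A B C D - 1 =
      fromBlocks 0 (A⁻¹ * B) (Bᴴ * Aᴴ⁻¹) 0 *
        ((fromBlocks A B C D)ᴴ * fromBlocks A B C D + 1) := by
  have hdet : IsUnit A.det := (isUnit_iff_isUnit_det A).mp hA
  have hdetH : IsUnit Aᴴ.det := by rw [det_conjTranspose]; exact hdet.star
  have hBD : A⁻¹ * B * Dᴴ = Cᴴ := by
    rw [Matrix.mul_assoc, ← h.mul_conjTranspose_eq_mul_conjTranspose,
      nonsing_inv_mul_cancel_left _ _ hdet]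
  have hBA : Bᴴ * Aᴴ⁻¹ * Aᴴ = Bᴴ := nonsing_inv_mul_cancel_right _ _ hdetH
  refine mul_sub_one_eq_mul_mul_add_one indefiniteDiagonal_mul_self h ?_
  rw [fromBlocks_conjTranspose, fromBlocks_mul_indefiniteDiagonal_add,
    fromBlocks_mul_indefiniteDiagonal_sub, Matrix.mul_smul, fromBlocks_multiply]
  simp [hBD, hBA]

end CommRing

theorem isUnit_block₁₁ {K : Type*} [Field K] [PartialOrder K] [StarRing K] [StarOrderedRing K]
    {A : Matrix m m K} {B : Matrix m n K} {C : Matrix n m K} {D : Matrix n n K}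
    (h : IsIndefiniteUnitary (fromBlocks A B C D)) : IsUnit A := by
  have hAA : IsUnit (Aᴴ * A) := by
    rw [h.conjTranspose_mul_self_eq_add_one]
    exact isUnit_conjTranspose_mul_self_add_one C
  rw [isUnit_iff_isUnit_det, det_mul] at hAA
  exact (isUnit_iff_isUnit_det A).mpr (isUnit_of_mul_isUnit_right hAA)

end IsIndefiniteUnitary

theorem cayley_like_formula_for_indefinite_unitary_general {m n K : Type*} [Fintype m] [Fintype n]
    [DecidableEq m] [DecidableEq n] [Field K] [PartialOrder K] [StarRing K] [StarOrderedRing K]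
    {M : Matrix (m ⊕ n) (m ⊕ n) K} (hM : IsIndefiniteUnitary M) :
    (Mᴴ * M - 1) * (Mᴴ * M + 1)⁻¹ =
      fromBlocks 0 (M.toBlocks₁₁⁻¹ * M.toBlocks₁₂) (M.toBlocks₁₂ᴴ * M.toBlocks₁₁ᴴ⁻¹) 0 := by
  obtain ⟨A, B, C, D, rfl⟩ : ∃ A B C D, M = fromBlocks A B C D :=
    ⟨_, _, _, _, (fromBlocks_toBlocks M).symm⟩
  have hdet := (isUnit_iff_isUnit_det _).mp
    (isUnit_conjTranspose_mul_self_add_one (fromBlocks A B C D))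
  rw [hM.conjTranspose_mul_self_sub_one_eq_mul hM.isUnit_block₁₁,
    mul_nonsing_inv_cancel_right _ _ hdet, toBlocks_fromBlocks₁₁, toBlocks_fromBlocks₁₂]

/-- If 𝒜 ∈ U(p,q) has block decomposition 𝒜 = (A B; C D), then
(𝒜*𝒜 − I)(𝒜*𝒜 + I)⁻¹ = (0, A⁻¹B; B*(A*)⁻¹, 0). -/
theorem cayley_like_formula_for_indefinite_unitary {p q : ℕ} (hp : 1 ≤ p) (hq : 1 ≤ q)
    (𝒜 : Matrix (Fin p ⊕ Fin q) (Fin p ⊕ Fin q) ℂ)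
    (h𝒜 : 𝒜ᴴ * Ipq p q * 𝒜 = Ipq p q) :
    (𝒜ᴴ * 𝒜 - 1) * (𝒜ᴴ * 𝒜 + 1)⁻¹ =
      Matrix.fromBlocks 0 ((𝒜.toBlocks₁₁)⁻¹ * 𝒜.toBlocks₁₂)
        ((𝒜.toBlocks₁₂)ᴴ * ((𝒜.toBlocks₁₁)ᴴ)⁻¹) 0 := by
  open ComplexOrder in
  exact cayley_like_formula_for_indefinite_unitary_general (isIndefiniteUnitary_iff_Ipq.mpr h𝒜)
end
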